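/- arXiv:2108.11937 — 2 statements merged into one kernel-verified Lean document; each statement's English description precedes it below -/
import Mathlib

section
/- If f : ℕ → ℂ is an MO function, then the double series ∑_{p prime} ∑_{k=1}^∞ |f(p^k)| diverges. -/
open Filter Finset

/-- `f` is a multiplicative arithmetical function: `f 1 = 1` and
`f (m*n) = f m * f n` whenever `gcd m n = 1`. -/
def IsMultFn (f : ℕ → ℂ) : Prop :=
  f 1 = 1 ∧ ∀ m n : ℕ, Nat.Coprime m n → f (m * n) = f m * f n

/-- The series `∑_{k=0}^∞ g k` converges (in the sense of partial sums) to `L`. -/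
def SeriesTendsTo (g : ℕ → ℂ) (L : ℂ) : Prop :=
  Filter.Tendsto (fun N => ∑ k ∈ Finset.range N, g k) Filter.atTop (nhds L)

/-- `f` is an MO function: multiplicative, `∑_{n=1}^∞ f n = 0`, and for each prime `p`
the series `∑_{k=0}^∞ f (p^k)` converges to a nonzero value. -/
def IsMO (f : ℕ → ℂ) : Prop :=
  IsMultFn f ∧ SeriesTendsTo (fun n => f (n + 1)) 0 ∧
    ∀ p : ℕ, p.Prime → ∃ L : ℂ, L ≠ 0 ∧ SeriesTendsTo (fun k => f (p ^ k)) L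

/-!
If `∑_p ∑_{k ≥ 1} ‖f (p ^ k)‖` converged, then the bound
`∑_{0 < n < N} ‖f n‖ ≤ ∏_{p < N} (1 + ∑_{k ≥ 1} ‖f (p ^ k)‖) ≤ exp (∑_p ∑_{k ≥ 1} ‖f (p ^ k)‖)`
would make `∑ f n` absolutely convergent, and hence equal to its Euler product. An absolutely
convergent product with nonzero factors is nonzero, whereas `∑ f n = 0`.
-/

theorem summable_norm_prime_pow {E : Type*} [Norm E] {f : ℕ → E}
    (hsum : Summable fun x : Nat.Primes × ℕ => ‖f ((x.1 : ℕ) ^ (x.2 + 1))‖)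
    {p : ℕ} (hp : p.Prime) : Summable fun k => ‖f (p ^ k)‖ :=
  (summable_nat_add_iff 1).mp (hsum.prod_factor ⟨p, hp⟩)

section EulerProduct

variable {R : Type*} [NormedCommRing R] [NormOneClass R] [NormMulClass R]
  {f : ArithmeticFunction R}

theorem sum_range_norm_le_prod_primesBelow_tsum (hf : f.IsMultiplicative)
    (hsum : ∀ {p : ℕ}, p.Prime → Summable fun k => ‖f (p ^ k)‖) (N : ℕ) :
    ∑ n ∈ range N, ‖f n‖ ≤ ∏ p ∈ N.primesBelow, ∑' k, ‖f (p ^ k)‖ := by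
  have hsmooth : HasSum (N.smoothNumbers.indicator fun n => ‖f n‖)
      (∏ p ∈ N.primesBelow, ∑' k, ‖f (p ^ k)‖) :=
    hasSum_subtype_iff_indicator.mp
      (EulerProduct.summable_and_hasSum_smoothNumbers_prod_primesBelow_tsum
        (f := fun n => ‖f n‖) (by simp [hf.map_one])
        (fun hmn => by simp [hf.map_mul_of_coprime hmn]) (fun hp => by simpa using hsum hp) N).2
  have hnonneg (n : ℕ) : 0 ≤ N.smoothNumbers.indicator (fun n => ‖f n‖) n :=
    Set.indicator_nonneg (fun _ _ => norm_nonneg _) n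
  refine (sum_le_sum fun n hn => ?_).trans (sum_le_hasSum (range N) (fun n _ => hnonneg n) hsmooth)
  rcases n.eq_zero_or_pos with rfl | hpos
  · simpa using hnonneg 0
  · rw [Set.indicator_of_mem (Nat.mem_smoothNumbers_of_lt hpos (mem_range.mp hn))]

theorem summable_norm_of_summable_norm_prime_pow (hf : f.IsMultiplicative)
    (hsum : Summable fun x : Nat.Primes × ℕ => ‖f ((x.1 : ℕ) ^ (x.2 + 1))‖) :
    Summable fun n => ‖f n‖ := by
  let a : Nat.Primes → ℝ := fun p => ∑' k : ℕ, ‖f ((p : ℕ) ^ (k + 1))‖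
  have ha (p : Nat.Primes) : 0 ≤ a p := tsum_nonneg fun _ => norm_nonneg _
  have hfactor (p : Nat.Primes) : ∑' k : ℕ, ‖f ((p : ℕ) ^ k)‖ = 1 + a p := by
    rw [(summable_norm_prime_pow hsum p.2).tsum_eq_zero_add, pow_zero, hf.map_one, norm_one]
  refine summable_of_sum_range_le (c := Real.exp (∑' p, a p)) (fun _ => norm_nonneg _) fun N => ?_
  let s : Finset Nat.Primes := N.primesBelow.subtype Nat.Prime
  calc ∑ n ∈ range N, ‖f n‖
      ≤ ∏ p ∈ N.primesBelow, ∑' k, ‖f (p ^ k)‖ :=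
        sum_range_norm_le_prod_primesBelow_tsum hf (summable_norm_prime_pow hsum) N
    _ = ∏ p ∈ s, ∑' k, ‖f ((p : ℕ) ^ k)‖ :=
        (prod_subtype_of_mem _ fun _ => Nat.prime_of_mem_primesBelow).symm
    _ = ∏ p ∈ s, (1 + a p) := prod_congr rfl fun p _ => hfactor p
    _ ≤ Real.exp (∑ p ∈ s, a p) := Real.prod_one_add_le_exp_sum _ ha
    _ ≤ Real.exp (∑' p, a p) := Real.exp_le_exp.mpr (hsum.prod.sum_le_tsum _ fun p _ => ha p)

theorem tsum_ne_zero_of_summable_norm_prime_pow [CompleteSpace R] (hf : f.IsMultiplicative)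
    (hsum : Summable fun x : Nat.Primes × ℕ => ‖f ((x.1 : ℕ) ^ (x.2 + 1))‖)
    (hne : ∀ p : ℕ, p.Prime → ∑' k, f (p ^ k) ≠ 0) : ∑' n, f n ≠ 0 := by
  have hfactor (p : Nat.Primes) :
      ∑' k : ℕ, f ((p : ℕ) ^ k) = 1 + ∑' k : ℕ, f ((p : ℕ) ^ (k + 1)) := by
    rw [(summable_norm_prime_pow hsum p.2).of_norm.tsum_eq_zero_add, pow_zero, hf.map_one]
  have htail : Summable fun p : Nat.Primes => ‖∑' k : ℕ, f ((p : ℕ) ^ (k + 1))‖ :=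
    hsum.prod.of_nonneg_of_le (fun _ => norm_nonneg _)
      fun p => norm_tsum_le_tsum_norm (hsum.prod_factor p)
  rw [← hf.eulerProduct_tprod (summable_norm_of_summable_norm_prime_pow hf hsum),
    tprod_congr hfactor]
  exact tprod_one_add_ne_zero_of_summable (fun p => hfactor p ▸ hne p p.2) htail

end EulerProduct

theorem toArithmeticFunction_apply_of_ne_zero {R : Type*} [Zero R] (f : ℕ → R) {n : ℕ}
    (hn : n ≠ 0) : toArithmeticFunction f n = f n :=
  if_neg hn

theorem isMultiplicative_toArithmeticFunction {R : Type*} [MonoidWithZero R] {f : ℕ → R}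
    (h_one : f 1 = 1) (h_mul : ∀ m n : ℕ, m.Coprime n → f (m * n) = f m * f n) :
    (toArithmeticFunction f).IsMultiplicative := by
  refine ArithmeticFunction.IsMultiplicative.iff_ne_zero.mpr ⟨h_one, fun hm hn hmn => ?_⟩
  simp only [toArithmeticFunction_apply_of_ne_zero, ne_eq, mul_eq_zero, hm, hn, or_self,
    not_false_eq_true, h_mul _ _ hmn]

theorem stmt3_general {R : Type*} [NormedCommRing R] [CompleteSpace R] [NormOneClass R]
    [NormMulClass R] {f : ℕ → R} (h_one : f 1 = 1)
    (h_mul : ∀ m n : ℕ, m.Coprime n → f (m * n) = f m * f n)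
    (h_sum : Tendsto (fun N => ∑ n ∈ range N, f (n + 1)) atTop (nhds 0))
    (h_prime : ∀ p : ℕ, p.Prime →
      ∃ L : R, L ≠ 0 ∧ Tendsto (fun N => ∑ k ∈ range N, f (p ^ k)) atTop (nhds L)) :
    ¬ Summable (fun x : Nat.Primes × ℕ => ‖f ((x.1 : ℕ) ^ (x.2 + 1))‖) := by
  intro hsum
  set g := toArithmeticFunction f
  have hg : g.IsMultiplicative := isMultiplicative_toArithmeticFunction h_one h_mul
  have hg_succ (n : ℕ) : g (n + 1) = f (n + 1) :=
    toArithmeticFunction_apply_of_ne_zero f n.succ_ne_zero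
  have hg_pow {p : ℕ} (hp : p.Prime) (k : ℕ) : g (p ^ k) = f (p ^ k) :=
    toArithmeticFunction_apply_of_ne_zero f (pow_ne_zero k hp.ne_zero)
  have hgsum : Summable fun x : Nat.Primes × ℕ => ‖g ((x.1 : ℕ) ^ (x.2 + 1))‖ :=
    hsum.congr fun x => by rw [hg_pow x.1.2]
  have hgs : Summable g := (summable_norm_of_summable_norm_prime_pow hg hgsum).of_norm
  refine tsum_ne_zero_of_summable_norm_prime_pow hg hgsum (fun p hp => ?_) ?_
  · obtain ⟨L, hL, hlim⟩ := h_prime p hp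
    have hpow : HasSum (fun k => g (p ^ k)) L :=
      (summable_norm_prime_pow hgsum hp).of_norm.hasSum_iff_tendsto_nat.mpr
        (by simpa only [hg_pow hp] using hlim)
    exact hpow.tsum_eq ▸ hL
  · have hsucc : HasSum (fun n => g (n + 1)) 0 :=
      ((summable_nat_add_iff 1).mpr hgs).hasSum_iff_tendsto_nat.mpr
        (by simpa only [hg_succ] using h_sum)
    rw [hgs.tsum_eq_zero_add, hsucc.tsum_eq, ArithmeticFunction.map_zero, add_zero]

theorem stmt3 (f : ℕ → ℂ) (hf : IsMO f) :
    ¬ Summable (fun x : Nat.Primes × ℕ => ‖f ((x.1 : ℕ) ^ (x.2 + 1))‖) :=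
  stmt3_general hf.1.1 hf.1.2 hf.2.1 hf.2.2
end

section
/- Let α be a complex number with Re α > 0. The function f(n) = (−1)^{n−1}/n^α is an MO function if and only if ζ(α) = 0, where ζ is the Riemann zeta function. -/
open Filter Finset

/-!
Pairing consecutive terms turns the alternating series `∑ (-1) ^ n / (n + 1) ^ s` into a series of
holomorphic functions converging locally uniformly on `0 < Re s`, where the identity theorem gives
`(s - 1) η(s) = (1 - 2 ^ (1 - s)) (s - 1) ζ(s)` for its sum `η`. The local series of
`(-1) ^ (n - 1) / n ^ α` at an odd prime `p` is the geometric series `(1 - p ^ (-α))⁻¹ ≠ 0`,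
and at `2` it is `(1 - 2 ^ (1 - α)) / (1 - 2 ^ (-α))`. So non-vanishing at `2` says exactly that the
factor `1 - 2 ^ (1 - α)` of `η(α)` is nonzero, and then `η(α) = 0` forces `ζ(α) = 0`. Conversely
`ζ` has no zeros on `1 ≤ Re s`, while `2 ^ (1 - α) = 1` requires `Re α = 1`.
-/

open Complex Topology

section PairedSums

lemma tendsto_atTop_of_two_mul_of_two_mul_add_one {X : Type*} {u : ℕ → X} {l : Filter X}
    (h_even : Tendsto (fun n => u (2 * n)) atTop l)
    (h_odd : Tendsto (fun n => u (2 * n + 1)) atTop l) : Tendsto u atTop l := by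
  intro U hU
  obtain ⟨a, ha⟩ := mem_atTop_sets.mp (h_even hU)
  obtain ⟨b, hb⟩ := mem_atTop_sets.mp (h_odd hU)
  refine mem_atTop_sets.mpr ⟨2 * a + 2 * b, fun n hn => ?_⟩
  obtain ⟨m, rfl | rfl⟩ := n.even_or_odd'
  · exact ha m (by lia)
  · exact hb m (by lia)

lemma sum_range_two_mul {M : Type*} [AddCommMonoid M] (f : ℕ → M) (N : ℕ) :
    ∑ n ∈ range (2 * N), f n = ∑ k ∈ range N, (f (2 * k) + f (2 * k + 1)) := by
  induction N with
  | zero => simp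
  | succ N ih => rw [mul_add_one, sum_range_succ, sum_range_succ, ih, sum_range_succ, add_assoc]

lemma tendsto_sum_range_of_hasSum_pairs {M : Type*} [AddCommMonoid M] [TopologicalSpace M]
    [ContinuousAdd M] {f : ℕ → M} {a : M} (hf : Tendsto f atTop (𝓝 0))
    (h : HasSum (fun k => f (2 * k) + f (2 * k + 1)) a) :
    Tendsto (fun N => ∑ n ∈ range N, f n) atTop (𝓝 a) := by
  have h_even : Tendsto (fun N => ∑ n ∈ range (2 * N), f n) atTop (𝓝 a) := by
    simpa only [sum_range_two_mul] using h.tendsto_sum_nat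
  have h_last : Tendsto (fun N => f (2 * N)) atTop (𝓝 0) :=
    hf.comp (tendsto_id.const_mul_atTop' two_pos)
  refine tendsto_atTop_of_two_mul_of_two_mul_add_one h_even ?_
  simpa only [sum_range_succ, add_zero] using h_even.add h_last

end PairedSums

section ComplexPowers

lemma norm_ofReal_cpow_sub_ofReal_cpow_le {s : ℂ} (hs : s.re ≤ 1) {a b : ℝ} (ha : 0 < a)
    (hab : a ≤ b) : ‖(b : ℂ) ^ s - (a : ℂ) ^ s‖ ≤ ‖s‖ * a ^ (s.re - 1) * (b - a) := by
  have h_deriv : ∀ x ∈ Set.Icc a b,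
      HasDerivWithinAt (fun x : ℝ => (x : ℂ) ^ s) (s * (x : ℂ) ^ (s - 1)) (Set.Icc a b) x := by
    intro x hx
    have hx0 : (x : ℂ) ∈ slitPlane := .inl (by simpa using ha.trans_le hx.1)
    simpa using ((hasDerivAt_id (x : ℂ)).cpow_const hx0).comp_ofReal.hasDerivWithinAt
  have h_bound : ∀ x ∈ Set.Icc a b, ‖s * (x : ℂ) ^ (s - 1)‖ ≤ ‖s‖ * a ^ (s.re - 1) := by
    intro x hx
    rw [norm_mul, norm_cpow_eq_rpow_re_of_pos (ha.trans_le hx.1), sub_re, one_re]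
    gcongr ‖s‖ * ?_
    exact Real.rpow_le_rpow_of_nonpos ha hx.1 (by linarith)
  simpa [abs_of_nonneg (sub_nonneg.mpr hab)] using
    (convex_Icc a b).norm_image_sub_le_of_norm_hasDerivWithin_le h_deriv h_bound
      (Set.left_mem_Icc.mpr hab) (Set.right_mem_Icc.mpr hab)

lemma natCast_pow_cpow (n k : ℕ) (s : ℂ) : ((n ^ k : ℕ) : ℂ) ^ s = ((n : ℂ) ^ s) ^ k := by
  rw [Nat.cast_pow, ← natCast_cpow_natCast_mul, cpow_nat_mul]

lemma norm_natCast_cpow_lt_one {n : ℕ} (hn : 1 < n) {s : ℂ} (hs : s.re < 0) :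
    ‖(n : ℂ) ^ s‖ < 1 := by
  rw [norm_natCast_cpow_of_pos (by lia)]
  exact Real.rpow_lt_one_of_one_lt_of_neg (by exact_mod_cast hn) hs

lemma natCast_cpow_ne_one {n : ℕ} (hn : 1 < n) {s : ℂ} (hs : s.re ≠ 0) : (n : ℂ) ^ s ≠ 1 := by
  intro h
  have h_norm : (n : ℝ) ^ s.re = (n : ℝ) ^ (0 : ℝ) := by
    rw [← norm_natCast_cpow_of_pos (by lia), h, norm_one, Real.rpow_zero]
  exact hs ((Real.rpow_right_inj (by positivity) (by exact_mod_cast hn.ne')).mp h_norm)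

lemma two_cpow_one_sub (s : ℂ) : (2 : ℂ) ^ (1 - s) = 2 * 2 ^ (-s) := by
  rw [sub_eq_add_neg, cpow_add _ _ two_ne_zero, cpow_one]

lemma tendsto_neg_one_pow_div_natCast_cpow {s : ℂ} (hs : 0 < s.re) :
    Tendsto (fun n : ℕ => (-1 : ℂ) ^ n / ((n + 1 : ℕ) : ℂ) ^ s) atTop (𝓝 0) := by
  have h_norm : Tendsto (fun n : ℕ => ((n + 1 : ℕ) : ℝ) ^ (-s.re)) atTop (𝓝 0) :=
    (tendsto_rpow_neg_atTop hs).comp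
      (tendsto_natCast_atTop_atTop.comp (tendsto_add_atTop_nat 1))
  refine squeeze_zero_norm (fun n => le_of_eq ?_) h_norm
  rw [norm_div, norm_pow, norm_neg, norm_one, one_pow, norm_natCast_cpow_of_pos n.succ_pos,
    Real.rpow_neg (Nat.cast_nonneg _), one_div]

end ComplexPowers

section DirichletEta

/-- The sum of the terms with indices `2 * k` and `2 * k + 1` of the alternating series
`∑ n, (-1) ^ n / (n + 1) ^ s`. -/
noncomputable def dirichletEtaPair (s : ℂ) (k : ℕ) : ℂ :=
  ((2 * k + 1 : ℕ) : ℂ) ^ (-s) - ((2 * k + 2 : ℕ) : ℂ) ^ (-s)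

/-- The Dirichlet eta function `η(s) = ∑ n, (-1) ^ n / (n + 1) ^ s` on the half-plane `0 < Re s`.
Consecutive terms are paired so that the series converges absolutely on the whole half-plane. -/
noncomputable def dirichletEta (s : ℂ) : ℂ :=
  ∑' k, dirichletEtaPair s k

variable {s : ℂ}

lemma norm_dirichletEtaPair_le (hs : -1 ≤ s.re) (k : ℕ) :
    ‖dirichletEtaPair s k‖ ≤ ‖s‖ * ((2 * k + 1 : ℕ) : ℝ) ^ (-s.re - 1) := by
  have h := norm_ofReal_cpow_sub_ofReal_cpow_le (s := -s) (by rw [neg_re]; linarith)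
    (a := (2 * k + 1 : ℕ)) (b := (2 * k + 2 : ℕ)) (by positivity) (by gcongr; lia)
  have h_length : ((2 * k + 2 : ℕ) : ℝ) - (2 * k + 1 : ℕ) = 1 := by push_cast; ring
  rwa [h_length, mul_one, norm_neg, neg_re, ofReal_natCast, ofReal_natCast, norm_sub_rev] at h

lemma summable_two_mul_add_one_rpow {r : ℝ} (hr : r < -1) :
    Summable (fun k : ℕ => ((2 * k + 1 : ℕ) : ℝ) ^ r) :=
  (Real.summable_nat_rpow.mpr hr).comp_injective (i := fun k : ℕ => 2 * k + 1)
    fun _ _ h => by lia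

lemma summable_dirichletEtaPair (hs : 0 < s.re) : Summable (dirichletEtaPair s) :=
  .of_norm_bounded ((summable_two_mul_add_one_rpow (by linarith)).mul_left ‖s‖)
    (norm_dirichletEtaPair_le (by linarith))

lemma differentiable_dirichletEtaPair (k : ℕ) : Differentiable ℂ (dirichletEtaPair · k) := by
  have h_cpow (n : ℕ) : Differentiable ℂ (fun s : ℂ => ((n + 1 : ℕ) : ℂ) ^ (-s)) := fun s =>
    differentiableAt_id.neg.const_cpow (.inl (Nat.cast_ne_zero.mpr n.succ_ne_zero))
  exact (h_cpow _).sub (h_cpow _)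

lemma differentiableAt_dirichletEta (hs : 0 < s.re) : DifferentiableAt ℂ dirichletEta s := by
  let U : Set ℂ := {z | s.re / 2 < z.re} ∩ Metric.ball 0 (‖s‖ + 1)
  have hU : IsOpen U := (isOpen_lt continuous_const continuous_re).inter Metric.isOpen_ball
  have hsU : s ∈ U := ⟨half_lt_self hs, by simp⟩
  have h_bound (k : ℕ) (z : ℂ) (hz : z ∈ U) :
      ‖dirichletEtaPair z k‖ ≤ (‖s‖ + 1) * ((2 * k + 1 : ℕ) : ℝ) ^ (-(s.re / 2) - 1) := by
    have hz_re : s.re / 2 < z.re := hz.1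
    have hz_norm : ‖z‖ < ‖s‖ + 1 := by simpa using hz.2
    refine (norm_dirichletEtaPair_le (by linarith) k).trans ?_
    gcongr
    exact_mod_cast Nat.le_add_left 1 (2 * k)
  have h_summable := (summable_two_mul_add_one_rpow (r := -(s.re / 2) - 1) (by linarith)).mul_left
    (‖s‖ + 1)
  exact (differentiableOn_tsum_of_summable_norm h_summable
    (fun k => (differentiable_dirichletEtaPair k).differentiableOn) hU h_bound).differentiableAt
    (hU.mem_nhds hsU)

lemma tendsto_sum_dirichletEta (hs : 0 < s.re) :
    Tendsto (fun N => ∑ n ∈ range N, (-1 : ℂ) ^ n / ((n + 1 : ℕ) : ℂ) ^ s) atTop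
      (𝓝 (dirichletEta s)) := by
  refine tendsto_sum_range_of_hasSum_pairs (tendsto_neg_one_pow_div_natCast_cpow hs) ?_
  refine (summable_dirichletEtaPair hs).hasSum.congr_fun fun k => ?_
  rw [dirichletEtaPair, pow_succ, (even_two_mul k).neg_one_pow, cpow_neg, cpow_neg]
  ring

lemma dirichletEta_eq_of_one_lt_re (hs : 1 < s.re) :
    dirichletEta s = (1 - 2 ^ (1 - s)) * riemannZeta s := by
  have h_summable : Summable (fun n : ℕ => ((n + 1 : ℕ) : ℂ) ^ (-s)) := by
    simpa only [cpow_neg, one_div] using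
      (summable_nat_add_iff 1).mpr (summable_one_div_nat_cpow.mpr hs)
  have h_zeta : HasSum (fun n : ℕ => ((n + 1 : ℕ) : ℂ) ^ (-s)) (riemannZeta s) := by
    convert h_summable.hasSum
    simp [zeta_eq_tsum_one_div_nat_add_one_cpow hs, cpow_neg]
  have h_odd : HasSum (fun k : ℕ => ((2 * k + 1 + 1 : ℕ) : ℂ) ^ (-s))
      (2 ^ (-s) * riemannZeta s) := by
    refine (h_zeta.mul_left (2 ^ (-s))).congr_fun fun k => ?_
    rw [show 2 * k + 1 + 1 = 2 * (k + 1) by ring, Nat.cast_mul, natCast_mul_natCast_cpow,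
      Nat.cast_two]
  have h_even : HasSum (fun k : ℕ => ((2 * k + 1 : ℕ) : ℂ) ^ (-s))
      (riemannZeta s - 2 ^ (-s) * riemannZeta s) := by
    have h : Summable (fun k : ℕ => ((2 * k + 1 : ℕ) : ℂ) ^ (-s)) :=
      h_summable.comp_injective (mul_right_injective₀ (two_ne_zero' ℕ))
    have h_split := (h.hasSum.even_add_odd (f := fun n => ((n + 1 : ℕ) : ℂ) ^ (-s)) h_odd).unique
      h_zeta
    rw [← eq_sub_of_add_eq h_split]
    exact h.hasSum
  calc dirichletEta s
    _ = riemannZeta s - 2 ^ (-s) * riemannZeta s - 2 ^ (-s) * riemannZeta s :=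
      (h_even.sub h_odd).tsum_eq
    _ = (1 - 2 ^ (1 - s)) * riemannZeta s := by rw [two_cpow_one_sub]; ring

lemma sub_one_mul_dirichletEta (hs : 0 < s.re) :
    (s - 1) * dirichletEta s = (1 - 2 ^ (1 - s)) * riemannZeta₁ s := by
  have h_open : IsOpen {z : ℂ | 0 < z.re} := isOpen_lt continuous_const continuous_re
  refine AnalyticOnNhd.eqOn_of_preconnected_of_eventuallyEq (𝕜 := ℂ) (z₀ := 2)
    (f := fun z => (z - 1) * dirichletEta z) (g := fun z => (1 - 2 ^ (1 - z)) * riemannZeta₁ z)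
    (DifferentiableOn.analyticOnNhd (fun z hz => ?_) h_open)
    (DifferentiableOn.analyticOnNhd (fun z _ => ?_) h_open)
    (convex_halfSpace_re_gt 0).isPreconnected (by simp) ?_ hs
  · exact ((differentiableAt_id.sub_const 1).mul
      (differentiableAt_dirichletEta hz)).differentiableWithinAt
  · have h_cpow : DifferentiableAt ℂ (fun z : ℂ => (2 : ℂ) ^ (1 - z)) z :=
      (differentiableAt_id.const_sub 1).const_cpow (.inl two_ne_zero)
    exact ((h_cpow.const_sub 1).mul (differentiable_riemannZeta₁ z)).differentiableWithinAt
  · filter_upwards [(isOpen_lt continuous_const continuous_re).mem_nhds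
      (show (1 : ℝ) < (2 : ℂ).re by norm_num)] with z hz
    have hz1 : z ≠ 1 := by rintro rfl; exact lt_irrefl _ hz
    rw [dirichletEta_eq_of_one_lt_re hz, riemannZeta_eq_inv_sub_mul hz1]
    field_simp [sub_ne_zero.mpr hz1]

theorem dirichletEta_eq (hs : 0 < s.re) (hs1 : s ≠ 1) :
    dirichletEta s = (1 - 2 ^ (1 - s)) * riemannZeta s := by
  refine mul_left_cancel₀ (sub_ne_zero.mpr hs1) ?_
  rw [sub_one_mul_dirichletEta hs, riemannZeta_eq_inv_sub_mul hs1]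
  field_simp [sub_ne_zero.mpr hs1]

end DirichletEta

section Multiplicativity

lemma IsMultFn.div {f g : ℕ → ℂ} (hf : IsMultFn f) (hg : IsMultFn g) :
    IsMultFn (fun n => f n / g n) :=
  ⟨by simp only [hf.1, hg.1, div_one], fun m n hmn => by
    simp only [hf.2 m n hmn, hg.2 m n hmn, mul_div_mul_comm]⟩

lemma isMultFn_natCast_cpow (s : ℂ) : IsMultFn (fun n => (n : ℂ) ^ s) :=
  ⟨by simp only [Nat.cast_one, one_cpow], fun m n _ => by
    simp only [Nat.cast_mul, natCast_mul_natCast_cpow]⟩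

lemma isMultFn_neg_one_pow_sub_one : IsMultFn (fun n => (-1) ^ (n - 1)) := by
  refine ⟨by simp, fun m n hmn => ?_⟩
  rcases m with _ | a
  · simp [(Nat.coprime_zero_left n).mp hmn]
  rcases n with _ | b
  · simp [(Nat.coprime_zero_right _).mp hmn]
  have hab : Even (a * b) := by
    by_contra h
    obtain ⟨ha, hb⟩ := Nat.odd_mul.mp (Nat.not_even_iff_odd.mp h)
    exact Nat.not_coprime_of_dvd_of_dvd one_lt_two ha.add_one.two_dvd hb.add_one.two_dvd hmn
  have h_exp : (a + 1) * (b + 1) - 1 = a * b + (a + b) := by grind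
  simp only [h_exp, add_tsub_cancel_right, pow_add, hab.neg_one_pow, one_mul]

end Multiplicativity

section LocalSeries

variable {s : ℂ}

lemma hasSum_prime_pow_of_ne_two (hs : 0 < s.re) {p : ℕ} (hp : p.Prime) (hp2 : p ≠ 2) :
    HasSum (fun k => (-1 : ℂ) ^ (p ^ k - 1) / ((p ^ k : ℕ) : ℂ) ^ s) (1 - (p : ℂ) ^ (-s))⁻¹ := by
  refine (hasSum_geometric_of_norm_lt_one
    (norm_natCast_cpow_lt_one hp.one_lt (by simpa using hs))).congr_fun fun k => ?_
  have h_even : Even (p ^ k - 1) := Nat.Odd.sub_odd (hp.odd_of_ne_two hp2).pow odd_one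
  rw [h_even.neg_one_pow, natCast_pow_cpow, cpow_neg, inv_pow, one_div]

lemma hasSum_two_pow (hs : 0 < s.re) :
    HasSum (fun k => (-1 : ℂ) ^ (2 ^ k - 1) / ((2 ^ k : ℕ) : ℂ) ^ s)
      ((1 - 2 ^ (1 - s)) / (1 - 2 ^ (-s))) := by
  have h_lt : ‖(2 : ℂ) ^ (-s)‖ < 1 :=
    mod_cast norm_natCast_cpow_lt_one one_lt_two (by simpa using hs)
  have h_ne : 1 - (2 : ℂ) ^ (-s) ≠ 0 := (isUnit_one_sub_of_norm_lt_one h_lt).ne_zero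
  have h_tail := (hasSum_geometric_of_norm_lt_one h_lt).mul_left (-2 ^ (-s))
  have h_term (k : ℕ) : (-1 : ℂ) ^ (2 ^ (k + 1) - 1) / ((2 ^ (k + 1) : ℕ) : ℂ) ^ s =
      -(2 : ℂ) ^ (-s) * ((2 : ℂ) ^ (-s)) ^ k := by
    have h_odd : Odd (2 ^ (k + 1) - 1) :=
      Nat.Even.sub_odd Nat.one_le_two_pow (even_two.pow_of_ne_zero k.succ_ne_zero) odd_one
    rw [h_odd.neg_one_pow, natCast_pow_cpow, Nat.cast_two, cpow_neg, neg_mul, ← pow_succ', inv_pow,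
      neg_div, one_div]
  have h_value : (1 - (2 : ℂ) ^ (1 - s)) / (1 - 2 ^ (-s)) - 1 =
      -(2 : ℂ) ^ (-s) * (1 - 2 ^ (-s))⁻¹ := by
    rw [two_cpow_one_sub]
    field_simp
    ring
  rw [← hasSum_nat_add_iff' 1, sum_range_one, pow_zero, tsub_self, pow_zero, Nat.cast_one, one_cpow,
    div_one, h_value]
  exact h_tail.congr_fun h_term

lemma exists_ne_zero_hasSum_prime_pow (hs : 0 < s.re) (hs2 : (2 : ℂ) ^ (1 - s) ≠ 1) {p : ℕ}
    (hp : p.Prime) :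
    ∃ L ≠ 0, HasSum (fun k => (-1 : ℂ) ^ (p ^ k - 1) / ((p ^ k : ℕ) : ℂ) ^ s) L := by
  have h_ne : 1 - (p : ℂ) ^ (-s) ≠ 0 :=
    sub_ne_zero.mpr (natCast_cpow_ne_one hp.one_lt (by simpa using hs.ne')).symm
  rcases eq_or_ne p 2 with rfl | hp2
  · exact ⟨_, div_ne_zero (sub_ne_zero.mpr hs2.symm) (mod_cast h_ne), hasSum_two_pow hs⟩
  · exact ⟨_, inv_ne_zero h_ne, hasSum_prime_pow_of_ne_two hs hp hp2⟩

end LocalSeries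

theorem stmt12 (α : ℂ) (hα : 0 < α.re) :
    IsMO (fun n : ℕ => (-1 : ℂ) ^ (n - 1) / (n : ℂ) ^ α) ↔ riemannZeta α = 0 := by
  have h_eta := tendsto_sum_dirichletEta hα
  constructor
  · rintro ⟨-, h_sum, h_prime⟩
    obtain ⟨L, hL, h_two⟩ := h_prime 2 Nat.prime_two
    rw [tendsto_nhds_unique h_two (hasSum_two_pow hα).tendsto_sum_nat] at hL
    have h_factor : 1 - (2 : ℂ) ^ (1 - α) ≠ 0 := (div_ne_zero_iff.mp hL).1
    have hα1 : α ≠ 1 := by rintro rfl; simp at h_factor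
    have h_zero : (1 - 2 ^ (1 - α)) * riemannZeta α = 0 := by
      rw [← dirichletEta_eq hα hα1, tendsto_nhds_unique h_eta h_sum]
    exact (mul_eq_zero.mp h_zero).resolve_left h_factor
  · intro h_zeta
    have hre : α.re < 1 := by
      contrapose! h_zeta
      exact riemannZeta_ne_zero_of_one_le_re h_zeta
    have hα1 : α ≠ 1 := by rintro rfl; simp at hre
    have h_two : (2 : ℂ) ^ (1 - α) ≠ 1 :=
      mod_cast natCast_cpow_ne_one one_lt_two (by simpa using (sub_pos.mpr hre).ne')
    rw [dirichletEta_eq hα hα1, h_zeta, mul_zero] at h_eta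
    refine ⟨isMultFn_neg_one_pow_sub_one.div (isMultFn_natCast_cpow α), h_eta, fun p hp => ?_⟩
    obtain ⟨L, hL, h_prime⟩ := exists_ne_zero_hasSum_prime_pow hα h_two hp
    exact ⟨L, hL, h_prime.tendsto_sum_nat⟩
end
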